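/- Let n ≥ 3 be a positive integer that is not a prime power, and let D_{2n} be the dihedral group of order 2n. Then the diameter of the difference graph D(D_{2n}) equals 2 if n is square-free, and equals 3 otherwise. -/

import Mathlib

/-- Adjacency in the difference of the enhanced power graph and the power graph:
`⟨x, y⟩` is cyclic but neither of `x`, `y` is a power of the other. -/
def diffAdj {G : Type*} [Group G] (x y : G) : Prop :=
  IsCyclic (Subgroup.closure ({x, y} : Set G)) ∧
    (¬ ∃ k : ℤ, y = x ^ k) ∧ (¬ ∃ k : ℤ, x = y ^ k)

/-- The vertex set of the difference graph `𝒟(G)`: the elements of `G` that are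
non-isolated in the difference of the enhanced power graph and the power graph. -/
abbrev DiffVertex (G : Type*) [Group G] := {x : G // ∃ y, diffAdj x y}

/-- The difference graph `𝒟(G)` of a group `G`. -/
def diffGraph (G : Type*) [Group G] : SimpleGraph (DiffVertex G) :=
  SimpleGraph.fromRel (fun a b => diffAdj a.val b.val)

/-- A dominating set of a graph: every vertex is in `S` or adjacent to a vertex of `S`. -/
def IsDominatingSet {V : Type*} (Γ : SimpleGraph V) (S : Set V) : Prop :=
  ∀ v : V, v ∈ S ∨ ∃ u ∈ S, Γ.Adj u v

/-- The domination number of a graph: the least size of a dominating set. -/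
noncomputable def dominationNumber {V : Type*} (Γ : SimpleGraph V) : ℕ :=
  sInf {n : ℕ | ∃ S : Set V, IsDominatingSet Γ S ∧ S.ncard = n}

/-- A maximal cyclic subgroup: a cyclic subgroup not properly contained in
another cyclic subgroup. -/
def IsMaxCyclic {G : Type*} [Group G] (C : Subgroup G) : Prop :=
  IsCyclic C ∧ ∀ D : Subgroup G, IsCyclic D → C ≤ D → C = D

/-!
Reflections are isolated: `⟨sr i⟩` is a maximal cyclic subgroup. So `𝒟(D₂ₙ)` is the difference
graph of the rotation subgroup, which is cyclic of order `n`. In a finite cyclic group one element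
is a power of another exactly when its order divides the other's order, hence adjacency is
incomparability of the orders under divisibility, and since `n` is not a prime power the vertices
are the elements of order different from `1` and `n`. Let `d ∣ e` be the orders of two vertices.

* If `n` is square-free, `n / e` is coprime to `e`, so it is incomparable with both `d` and `e`.
* In general some prime power `P = p ^ a ∣ n` does not divide `e`, and `n` has a prime factor
  `q ≠ p`. The divisors `P` and `q` are incomparable, and each of `d`, `e` is incomparable with one
  of them, so the distance is at most `3`.
* A rotation `x` of odd prime order and `x⁻¹` are distinct and not adjacent.
* If `p ^ 2 ∣ n`, orders `p` and `n / p` have no common neighbour: a divisor of `n` prime to `p`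
  divides `n / p`.
-/

section Divisibility

theorem exists_prime_dvd_ne_of_not_isPrimePow {n : ℕ} (hn : n ≠ 1) (hpp : ¬ IsPrimePow n)
    (p : ℕ) : ∃ q, q.Prime ∧ q ∣ n ∧ q ≠ p := by
  by_contra! h
  obtain ⟨q, hq, hqn⟩ := Nat.exists_prime_and_dvd hn
  refine hpp (isPrimePow_iff_unique_prime_dvd.2 ⟨q, ⟨hq, hqn⟩, fun r hr => ?_⟩)
  exact (h r hr.1 hr.2).trans (h q hq hqn).symm

theorem incompRel_dvd_of_coprime {a b : ℕ} (hab : a.Coprime b) (ha : a ≠ 1) (hb : b ≠ 1) :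
    IncompRel (· ∣ ·) a b :=
  ⟨fun h => ha (hab.eq_one_of_dvd h), fun h => hb (hab.symm.eq_one_of_dvd h)⟩

theorem exists_incompRel_dvd_of_squarefree {n d e : ℕ} (hsq : Squarefree n) (hde : d ∣ e)
    (hen : e ∣ n) (hd : d ≠ 1) (he : e ≠ n) :
    ∃ f, f ∣ n ∧ IncompRel (· ∣ ·) d f ∧ IncompRel (· ∣ ·) f e := by
  obtain ⟨f, rfl⟩ := hen
  have hef : e.Coprime f := (Nat.squarefree_mul_iff.1 hsq).1
  have hf : f ≠ 1 := fun h => he (by rw [h, mul_one])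
  have he1 : e ≠ 1 := fun h => hd (Nat.dvd_one.1 (h ▸ hde))
  exact ⟨f, dvd_mul_left f e, incompRel_dvd_of_coprime (hef.coprime_dvd_left hde) hd hf,
    incompRel_dvd_of_coprime hef.symm hf he1⟩

theorem exists_incompRel_dvd_pair_of_not_isPrimePow {n e : ℕ} (hpp : ¬ IsPrimePow n)
    (hen : e ∣ n) (he : e ≠ n) :
    ∃ f g, f ∣ n ∧ g ∣ n ∧ IncompRel (· ∣ ·) f g ∧
      ∀ d, d ∣ e → d ≠ 1 → IncompRel (· ∣ ·) d f ∨ IncompRel (· ∣ ·) d g := by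
  have hne : ¬ n ∣ e := fun h => he (Nat.dvd_antisymm hen h)
  have hn : n ≠ 1 := fun h => hne (h ▸ one_dvd e)
  obtain ⟨p, a, hp, hPn, hPe⟩ : ∃ p a, p.Prime ∧ p ^ a ∣ n ∧ ¬ p ^ a ∣ e := by
    by_contra! h
    exact hne ((Nat.dvd_iff_prime_pow_dvd_dvd e n).2 h)
  obtain ⟨q, hq, hqn, hqp⟩ := exists_prime_dvd_ne_of_not_isPrimePow hn hpp p
  have hPq : (p ^ a).Coprime q := ((Nat.coprime_primes hp hq).2 hqp.symm).pow_left a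
  have hP : p ^ a ≠ 1 := fun h => hPe (h ▸ one_dvd e)
  refine ⟨p ^ a, q, hPn, hqn, incompRel_dvd_of_coprime hPq hP hq.ne_one, fun d hde hd => ?_⟩
  by_cases hdP : d ∣ p ^ a
  · exact .inr (incompRel_dvd_of_coprime (hPq.coprime_dvd_left hdP) hd hq.ne_one)
  · exact .inl ⟨hdP, fun h => hPe (h.trans hde)⟩

end Divisibility

section ExtendedDiameter

variable {V W : Type*} {Γ : SimpleGraph V} {Δ : SimpleGraph W}

theorem edist_le_three_of_adj {a b u v : V} (hab : Γ.Adj a b) (hu : Γ.Adj u a ∨ Γ.Adj u b)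
    (hv : Γ.Adj v a ∨ Γ.Adj v b) : Γ.edist u v ≤ 3 := by
  have htwo {w : V} (huw : Γ.Adj u w) (hvw : Γ.Adj v w) : Γ.edist u v ≤ 3 :=
    (Γ.edist_le (.cons huw (.cons hvw.symm .nil))).trans (by norm_num)
  rcases hu with hua | hub <;> rcases hv with hva | hvb
  · exact htwo hua hva
  · exact Γ.edist_le (.cons hua (.cons hab (.cons hvb.symm .nil)))
  · exact Γ.edist_le (.cons hub (.cons hab.symm (.cons hva.symm .nil)))
  · exact htwo hub hvb

theorem two_le_ediam_of_not_adj {u v : V} (hne : u ≠ v) (h : ¬ Γ.Adj u v) : 2 ≤ Γ.ediam := by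
  have hlt : 1 < Γ.edist u v := by
    rw [← not_le, SimpleGraph.edist_le_one_iff_adj_or_eq]
    exact not_or.2 ⟨h, hne⟩
  calc (2 : ℕ∞) = 1 + 1 := one_add_one_eq_two.symm
    _ ≤ Γ.edist u v := Order.add_one_le_of_lt hlt
    _ ≤ Γ.ediam := SimpleGraph.edist_le_ediam

theorem edist_map_le (φ : Γ →g Δ) (u v : V) : Δ.edist (φ u) (φ v) ≤ Γ.edist u v := by
  refine le_iInf fun p => ?_
  simpa only [SimpleGraph.Walk.length_map] using Δ.edist_le (p.map φ)

theorem ediam_le_of_surjective (φ : Γ →g Δ) (hφ : Function.Surjective φ) :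
    Δ.ediam ≤ Γ.ediam := by
  refine SimpleGraph.ediam_le_of_edist_le fun u v => ?_
  obtain ⟨u, rfl⟩ := hφ u
  obtain ⟨v, rfl⟩ := hφ v
  exact (edist_map_le φ u v).trans SimpleGraph.edist_le_ediam

theorem ediam_eq_of_iso (φ : Γ ≃g Δ) : Γ.ediam = Δ.ediam :=
  le_antisymm (ediam_le_of_surjective φ.symm.toHom φ.symm.surjective)
    (ediam_le_of_surjective φ.toHom φ.surjective)

end ExtendedDiameter

section DifferenceGraph

open Subgroup

variable {G : Type*} [Group G]

theorem isCyclic_closure_pair_iff {x y : G} :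
    IsCyclic (closure {x, y}) ↔ ∃ g, x ∈ zpowers g ∧ y ∈ zpowers g := by
  constructor
  · intro h
    obtain ⟨g, hg⟩ := (closure {x, y}).isCyclic_iff_exists_zpowers_eq_top.1 h
    exact ⟨g, hg ▸ subset_closure (by simp), hg ▸ subset_closure (by simp)⟩
  · rintro ⟨g, hx, hy⟩
    exact isCyclic_of_le ((closure_le _).2 (Set.pair_subset hx hy))

theorem diffAdj_iff {x y : G} :
    diffAdj x y ↔
      (∃ g, x ∈ zpowers g ∧ y ∈ zpowers g) ∧ y ∉ zpowers x ∧ x ∉ zpowers y := by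
  simp only [diffAdj, isCyclic_closure_pair_iff, mem_zpowers_iff, eq_comm]

theorem diffAdj_comm {x y : G} : diffAdj x y ↔ diffAdj y x := by
  rw [diffAdj, diffAdj, Set.pair_comm, and_comm (a := ¬ _)]

theorem diffAdj.inv_left {x y : G} (h : diffAdj x y) : diffAdj x⁻¹ y := by
  simpa only [diffAdj_iff, zpowers_inv, inv_mem_iff] using h

theorem IsMaxCyclic.not_diffAdj {x : G} (hx : IsMaxCyclic (zpowers x)) (y : G) :
    ¬ diffAdj x y := by
  rw [diffAdj_iff]
  rintro ⟨⟨g, hxg, hyg⟩, hyx, -⟩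
  exact hyx (hx.2 _ inferInstance (zpowers_le.2 hxg) ▸ hyg)

theorem orderOf_diffVertex_ne_one (v : DiffVertex G) : orderOf v.1 ≠ 1 := by
  obtain ⟨x, y, hxy⟩ := v
  intro h
  obtain rfl : x = 1 := orderOf_eq_one_iff.1 h
  exact (diffAdj_iff.1 hxy).2.2 (one_mem _)

theorem diffGraph_adj {u v : DiffVertex G} : (diffGraph G).Adj u v ↔ diffAdj u.1 v.1 := by
  rw [diffGraph, SimpleGraph.fromRel_adj, diffAdj_comm (x := v.1), or_self, and_iff_right_iff_imp]
  rintro h rfl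
  exact (diffAdj_iff.1 h).2.1 (mem_zpowers _)

theorem two_le_ediam_diffGraph {x y : G} (hxy : diffAdj x y) (hx : x ≠ x⁻¹) :
    2 ≤ (diffGraph G).ediam := by
  let u : DiffVertex G := ⟨x, y, hxy⟩
  let v : DiffVertex G := ⟨x⁻¹, y, hxy.inv_left⟩
  have huv : ¬ (diffGraph G).Adj u v := fun h =>
    (diffAdj_iff.1 (diffGraph_adj.1 h)).2.1 (inv_mem (mem_zpowers x))
  exact two_le_ediam_of_not_adj (fun h => hx (congrArg Subtype.val h)) huv

theorem diffAdj_coe_iff {H : Subgroup G} {x y : H} : diffAdj (x : G) (y : G) ↔ diffAdj x y := by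
  have hmap : closure {(x : G), (y : G)} = (closure {x, y}).map H.subtype := by
    rw [MonoidHom.map_closure, Set.image_pair]
    rfl
  have hcyc : IsCyclic (closure {(x : G), (y : G)}) ↔ IsCyclic (closure {x, y}) := by
    rw [hmap]
    exact ((closure {x, y}).equivMapOfInjective _ H.subtype_injective).isCyclic.symm
  simp only [diffAdj, hcyc, Subtype.ext_iff, coe_zpow]

/-- The isomorphism of `𝒟(H)` onto `𝒟(G)` for a subgroup `H` containing every vertex of `𝒟(G)`; it
reduces the diameter of `𝒟(G)` to that of `𝒟(H)`. -/
def diffGraphSubgroupIso (H : Subgroup G) (hH : ∀ x y : G, diffAdj x y → x ∈ H) :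
    diffGraph H ≃g diffGraph G where
  toFun v := ⟨v.1, by
    obtain ⟨x, y, hxy⟩ := v
    exact ⟨y, diffAdj_coe_iff.2 hxy⟩⟩
  invFun v := ⟨⟨v.1, v.2.elim (hH v.1)⟩, by
    obtain ⟨x, y, hxy⟩ := v
    exact ⟨⟨y, hH y x (diffAdj_comm.1 hxy)⟩, diffAdj_coe_iff.1 hxy⟩⟩
  left_inv _ := rfl
  right_inv _ := rfl
  map_rel_iff' := by
    intro u v
    simp only [diffGraph_adj]
    exact diffAdj_coe_iff

end DifferenceGraph

section FiniteCyclic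

open Subgroup

variable {G : Type*} [Group G] [IsCyclic G] [Finite G]

theorem mem_zpowers_iff_orderOf_dvd {x y : G} : y ∈ zpowers x ↔ orderOf y ∣ orderOf x := by
  refine ⟨orderOf_dvd_of_mem_zpowers, fun h => ?_⟩
  have := Fintype.ofFinite G
  classical
  -- The equation `z ^ orderOf x = 1` has at most `orderOf x` solutions, so the powers of `x`
  -- are all of them.
  have hsub : (zpowers x : Set G).toFinset ⊆ ({z | z ^ orderOf x = 1} : Finset G) := by
    intro z hz
    have hz' : z ∈ zpowers x := by simpa only [Set.mem_toFinset, SetLike.mem_coe] using hz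
    simpa only [Finset.mem_filter_univ] using
      orderOf_dvd_iff_pow_eq_one.1 (orderOf_dvd_of_mem_zpowers hz')
  have hcard : ({z | z ^ orderOf x = 1} : Finset G).card ≤ (zpowers x : Set G).toFinset.card := by
    rw [Set.toFinset_card]
    exact (IsCyclic.card_pow_eq_one_le (orderOf_pos x)).trans_eq Fintype.card_zpowers.symm
  have hy : y ∈ (zpowers x : Set G).toFinset := by
    rw [Finset.eq_of_subset_of_card_le hsub hcard, Finset.mem_filter_univ]
    exact orderOf_dvd_iff_pow_eq_one.1 h
  simpa only [Set.mem_toFinset, SetLike.mem_coe] using hy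

theorem exists_orderOf_eq_of_dvd_natCard {d : ℕ} (hd : d ∣ Nat.card G) :
    ∃ x : G, orderOf x = d := by
  obtain ⟨g, hg⟩ := isCyclic_iff_exists_orderOf_eq_natCard.1 ‹IsCyclic G›
  exact ⟨g ^ (orderOf g / d), orderOf_pow_orderOf_div (orderOf_pos g).ne' (hg ▸ hd)⟩

theorem diffAdj_iff_incompRel_orderOf {x y : G} :
    diffAdj x y ↔ IncompRel (· ∣ ·) (orderOf x) (orderOf y) := by
  obtain ⟨g, hg⟩ := IsCyclic.exists_generator (α := G)
  have hxy : ∃ g, x ∈ zpowers g ∧ y ∈ zpowers g := ⟨g, hg x, hg y⟩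
  rw [diffAdj_iff, and_iff_right hxy, mem_zpowers_iff_orderOf_dvd, mem_zpowers_iff_orderOf_dvd,
    and_comm, IncompRel]

theorem diffGraph_adj_iff_incompRel_orderOf {u v : DiffVertex G} :
    (diffGraph G).Adj u v ↔ IncompRel (· ∣ ·) (orderOf u.1) (orderOf v.1) :=
  diffGraph_adj.trans diffAdj_iff_incompRel_orderOf

theorem orderOf_diffVertex_ne_natCard (v : DiffVertex G) : orderOf v.1 ≠ Nat.card G := by
  obtain ⟨x, y, hxy⟩ := v
  intro h
  exact (diffAdj_iff_incompRel_orderOf.1 hxy).2 (h ▸ orderOf_dvd_natCard y)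

theorem exists_diffGraph_adj_of_incompRel {d f : ℕ} (hd : d ∣ Nat.card G) (hf : f ∣ Nat.card G)
    (h : IncompRel (· ∣ ·) d f) :
    ∃ u v : DiffVertex G, (diffGraph G).Adj u v ∧ orderOf u.1 = d ∧ orderOf v.1 = f := by
  obtain ⟨x, rfl⟩ := exists_orderOf_eq_of_dvd_natCard hd
  obtain ⟨y, rfl⟩ := exists_orderOf_eq_of_dvd_natCard hf
  have hxy : diffAdj x y := diffAdj_iff_incompRel_orderOf.2 h
  exact ⟨⟨x, y, hxy⟩, ⟨y, x, diffAdj_comm.1 hxy⟩, diffGraph_adj.2 hxy, rfl, rfl⟩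

theorem exists_diffVertex_orderOf_eq (hpp : ¬ IsPrimePow (Nat.card G)) {d : ℕ}
    (hd : d ∣ Nat.card G) (hd1 : d ≠ 1) (hdn : d ≠ Nat.card G) :
    ∃ v : DiffVertex G, orderOf v.1 = d := by
  obtain ⟨f, hf, hdf⟩ : ∃ f, f ∣ Nat.card G ∧ IncompRel (· ∣ ·) d f := by
    obtain ⟨f, g, hf, hg, -, hfg⟩ := exists_incompRel_dvd_pair_of_not_isPrimePow hpp hd hdn
    exact (hfg d dvd_rfl hd1).elim (⟨f, hf, ·⟩) (⟨g, hg, ·⟩)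
  obtain ⟨v, -, -, hv, -⟩ := exists_diffGraph_adj_of_incompRel hd hf hdf
  exact ⟨v, hv⟩

theorem ediam_diffGraph_le_of_forall_dvd {k : ℕ∞} (hk : 1 ≤ k)
    (h : ∀ u v : DiffVertex G, orderOf u.1 ∣ orderOf v.1 → (diffGraph G).edist u v ≤ k) :
    (diffGraph G).ediam ≤ k := by
  refine SimpleGraph.ediam_le_of_edist_le fun u v => ?_
  by_cases huv : orderOf u.1 ∣ orderOf v.1
  · exact h u v huv
  by_cases hvu : orderOf v.1 ∣ orderOf u.1
  · exact SimpleGraph.edist_comm.trans_le (h v u hvu)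
  have hadj : (diffGraph G).Adj u v := diffGraph_adj_iff_incompRel_orderOf.2 ⟨huv, hvu⟩
  exact (SimpleGraph.edist_eq_one_iff_adj.2 hadj).trans_le hk

theorem ediam_diffGraph_le_two (hsq : Squarefree (Nat.card G)) : (diffGraph G).ediam ≤ 2 := by
  refine ediam_diffGraph_le_of_forall_dvd one_le_two fun u v huv => ?_
  obtain ⟨f, hf, huf, hfv⟩ := exists_incompRel_dvd_of_squarefree hsq huv (orderOf_dvd_natCard v.1)
    (orderOf_diffVertex_ne_one u) (orderOf_diffVertex_ne_natCard v)
  obtain ⟨w, -, -, rfl, -⟩ := exists_diffGraph_adj_of_incompRel hf (orderOf_dvd_natCard v.1) hfv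
  exact (diffGraph G).edist_le (.cons (diffGraph_adj_iff_incompRel_orderOf.2 huf)
    (.cons (diffGraph_adj_iff_incompRel_orderOf.2 hfv) .nil))

theorem ediam_diffGraph_le_three (hpp : ¬ IsPrimePow (Nat.card G)) :
    (diffGraph G).ediam ≤ 3 := by
  refine ediam_diffGraph_le_of_forall_dvd (by norm_num) fun u v huv => ?_
  obtain ⟨f, g, hf, hg, hfg, hdiv⟩ := exists_incompRel_dvd_pair_of_not_isPrimePow hpp
    (orderOf_dvd_natCard v.1) (orderOf_diffVertex_ne_natCard v)
  obtain ⟨a, b, hab, rfl, rfl⟩ := exists_diffGraph_adj_of_incompRel hf hg hfg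
  have hadj (w : DiffVertex G) (hw : orderOf w.1 ∣ orderOf v.1) :
      (diffGraph G).Adj w a ∨ (diffGraph G).Adj w b := by
    simpa only [diffGraph_adj_iff_incompRel_orderOf] using
      hdiv _ hw (orderOf_diffVertex_ne_one w)
  exact edist_le_three_of_adj hab (hadj u huv) (hadj v dvd_rfl)

theorem two_le_ediam_diffGraph_of_not_isPrimePow [Nontrivial G]
    (hpp : ¬ IsPrimePow (Nat.card G)) : 2 ≤ (diffGraph G).ediam := by
  obtain ⟨p, hp, hpn, hp2⟩ :=
    exists_prime_dvd_ne_of_not_isPrimePow Finite.one_lt_card.ne' hpp 2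
  obtain ⟨⟨x, y, hxy⟩, rfl⟩ := exists_diffVertex_orderOf_eq hpp hpn hp.ne_one
    (fun h => hpp (h ▸ hp.isPrimePow))
  refine two_le_ediam_diffGraph hxy fun hx => hp2 ?_
  have hx2 : x ^ 2 = 1 := by rw [sq, mul_eq_one_iff_eq_inv]; exact hx
  exact (Nat.prime_dvd_prime_iff_eq hp Nat.prime_two).1 (orderOf_dvd_of_pow_eq_one hx2)

theorem three_le_ediam_diffGraph (hpp : ¬ IsPrimePow (Nat.card G))
    (hsq : ¬ Squarefree (Nat.card G)) : 3 ≤ (diffGraph G).ediam := by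
  obtain ⟨p, hp, e, hpe, hn⟩ : ∃ p, p.Prime ∧ ∃ e, p ∣ e ∧ Nat.card G = p * e := by
    rw [Nat.squarefree_iff_prime_squarefree] at hsq
    push Not at hsq
    obtain ⟨p, hp, m, hm⟩ := hsq
    exact ⟨p, hp, p * m, dvd_mul_right p m, hm.trans (mul_assoc p p m)⟩
  have he1 : e ≠ 1 := fun h => hp.ne_one (Nat.dvd_one.1 (h ▸ hpe))
  have hen : e ≠ Nat.card G := fun h => by
    have he0 : 0 < e := h ▸ Nat.card_pos
    exact hp.one_lt.ne' (Nat.eq_of_mul_eq_mul_right he0 (by rw [one_mul, ← hn, ← h]))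
  obtain ⟨u, hu⟩ := exists_diffVertex_orderOf_eq hpp (hn ▸ dvd_mul_right p e) hp.ne_one
    (fun h => hpp (h ▸ hp.isPrimePow))
  obtain ⟨v, hv⟩ := exists_diffVertex_orderOf_eq hpp (hn ▸ dvd_mul_left e p) he1 hen
  have huv : u ≠ v := by
    rintro rfl
    rw [hn, ← hv, hu, ← sq] at hpp
    exact hpp (hp.isPrimePow.pow two_ne_zero)
  have hnadj : ¬ (diffGraph G).Adj u v := fun h =>
    (diffGraph_adj_iff_incompRel_orderOf.1 h).1 (hu ▸ hv ▸ hpe)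
  have hcommon : (diffGraph G).commonNeighbors u v = ∅ := by
    refine Set.eq_empty_of_forall_notMem fun w hw => ?_
    simp only [SimpleGraph.mem_commonNeighbors, diffGraph_adj_iff_incompRel_orderOf, hu, hv] at hw
    have hpw : p.Coprime (orderOf w.1) := hp.coprime_iff_not_dvd.2 hw.1.1
    exact hw.2.2 (hpw.symm.dvd_of_dvd_mul_left (hn ▸ orderOf_dvd_natCard w.1))
  have hlt := SimpleGraph.two_lt_edist_iff.2 ⟨huv, hnadj, hcommon⟩
  exact (Order.add_one_le_of_lt hlt).trans SimpleGraph.edist_le_ediam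

theorem ediam_diffGraph_of_isCyclic [Nontrivial G] (hpp : ¬ IsPrimePow (Nat.card G)) :
    (diffGraph G).ediam = if Squarefree (Nat.card G) then 2 else 3 := by
  split_ifs with hsq
  · exact le_antisymm (ediam_diffGraph_le_two hsq) (two_le_ediam_diffGraph_of_not_isPrimePow hpp)
  · exact le_antisymm (ediam_diffGraph_le_three hpp) (three_le_ediam_diffGraph hpp hsq)

end FiniteCyclic

section Dihedral

open DihedralGroup Subgroup

variable {n : ℕ}

theorem r_mem_zpowers_r_one (i : ZMod n) : r i ∈ zpowers (r 1 : DihedralGroup n) := by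
  obtain ⟨k, rfl⟩ := ZMod.intCast_surjective i
  exact ⟨k, r_one_zpow k⟩

theorem eq_of_sr_mem_zpowers {i : ZMod n} {g : DihedralGroup n} (h : sr i ∈ zpowers g) :
    g = sr i := by
  obtain ⟨k, hk⟩ := mem_zpowers_iff.1 h
  rcases g with j | j
  · simp only [r_zpow, reduceCtorEq] at hk
  · have hsq : (sr j : DihedralGroup n) ^ (2 : ℤ) = 1 := by rw [zpow_ofNat, sq, sr_mul_self]
    obtain ⟨l, rfl | rfl⟩ := Int.even_or_odd' k
    · rw [zpow_mul, hsq, one_zpow, one_def] at hk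
      cases hk
    · simpa only [zpow_add, zpow_mul, hsq, one_zpow, one_mul, zpow_one] using hk

theorem isMaxCyclic_zpowers_sr (i : ZMod n) : IsMaxCyclic (zpowers (sr i : DihedralGroup n)) := by
  refine ⟨inferInstance, fun D hD hle => ?_⟩
  obtain ⟨g, rfl⟩ := D.isCyclic_iff_exists_zpowers_eq_top.1 hD
  rw [eq_of_sr_mem_zpowers (hle (mem_zpowers (sr i)))]

theorem mem_zpowers_r_one_of_diffAdj {x y : DihedralGroup n} (h : diffAdj x y) :
    x ∈ zpowers (r 1) := by
  rcases x with i | i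
  · exact r_mem_zpowers_r_one i
  · exact absurd h ((isMaxCyclic_zpowers_sr i).not_diffAdj y)

end Dihedral

/-- Corollary 4.3: for `n ≥ 3` not a prime power, the diameter of the difference graph of
the dihedral group of order `2n` is `2` if `n` is square-free and `3` otherwise. -/
theorem dihedral_diffGraph_diam
    (n : ℕ) (hn : 3 ≤ n) (hpp : ¬ IsPrimePow n) :
    (diffGraph (DihedralGroup n)).diam = if Squarefree n then 2 else 3 := by
  let C : Subgroup (DihedralGroup n) := Subgroup.zpowers (.r 1)
  have hC : Nat.card C = n := (Nat.card_zpowers _).trans DihedralGroup.orderOf_r_one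
  have : Finite C := Nat.finite_of_card_ne_zero (by omega)
  have : Nontrivial C := Finite.one_lt_card_iff_nontrivial.1 (by omega)
  have hediam : (diffGraph (DihedralGroup n)).ediam = if Squarefree n then 2 else 3 := by
    rw [← ediam_eq_of_iso (diffGraphSubgroupIso C fun _ _ => mem_zpowers_r_one_of_diffAdj),
      ediam_diffGraph_of_isCyclic (hC.symm ▸ hpp), hC]
  rw [SimpleGraph.diam, hediam]
  split_ifs <;> rfl
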